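/- Let n ≥ 1, m > n, and let p : ℝ^n → [1,∞) be a measurable exponent (possibly unbounded) with p ∈ P^log(ℝ^n), 2 ≤ p⁻, and p_∞ = ∞ (i.e. the log-Hölder decay condition holds with limit value 1/p_∞ = 0). Define ϑ(t) = 2/p⁻ for 0 < t ≤ 1 and ϑ(t) = 0 for t > 1. Then there exists a constant C > 0, depending only on p, m and n, such that for every t > 0 and every f ∈ L^{p(·)/2}(ℝ^n), ‖η_{t,m} * f‖_{L^{p(·)}(ℝ^n)} ≤ C t^{−nϑ(t)} ‖f‖_{L^{p(·)/2}(ℝ^n)}. -/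

import Mathlib

open MeasureTheory Filter Real
open scoped ENNReal

noncomputable section

/-- Euclidean space `ℝⁿ`. -/
abbrev Esp (n : ℕ) := EuclideanSpace ℝ (Fin n)

/-- The variable exponent modular `ρ_{p(·)}(f) = ∫_{ℝⁿ} |f(x)|^{p(x)} dx`. -/
def vMod (n : ℕ) (p : Esp n → ℝ) (f : Esp n → ℝ) : ℝ≥0∞ :=
  ∫⁻ x, (ENNReal.ofReal |f x|) ^ (p x) ∂volume

/-- The Luxemburg norm `‖f‖_{L^{p(·)}} = inf {λ > 0 : ρ_{p(·)}(f/λ) ≤ 1}`. -/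
def luxNorm (n : ℕ) (p : Esp n → ℝ) (f : Esp n → ℝ) : ℝ :=
  sInf {lam : ℝ | 0 < lam ∧ vMod n p (fun x => f x / lam) ≤ 1}

/-- Membership in the variable exponent Lebesgue space `L^{p(·)}(ℝⁿ)`. -/
def MemVLp (n : ℕ) (p : Esp n → ℝ) (f : Esp n → ℝ) : Prop :=
  AEMeasurable f volume ∧ ∃ lam : ℝ, 0 < lam ∧ vMod n p (fun x => f x / lam) ≤ 1

/-- Global log-Hölder continuity of `1/p` with decay value `l` (representing `l = 1/p_∞`). -/
def IsLogHolder (n : ℕ) (p : Esp n → ℝ) (l : ℝ) : Prop :=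
  ∃ c : ℝ, 0 < c ∧
    (∀ x y : Esp n, |1 / p x - 1 / p y| ≤ c / Real.log (Real.exp 1 + 1 / ‖x - y‖)) ∧
    (∀ x : Esp n, |1 / p x - l| ≤ c / Real.log (Real.exp 1 + ‖x‖))

/-- The kernel `η_{t,m}(x) = t^{-n} (1 + |x|/t)^{-m}`. -/
def etaKer (n : ℕ) (t m : ℝ) (x : Esp n) : ℝ :=
  t ^ (-(n : ℝ)) * (1 + ‖x‖ / t) ^ (-m)

/-- Convolution `(u * v)(x) = ∫ u(x - y) v(y) dy`. -/
def convR (n : ℕ) (u v : Esp n → ℝ) (x : Esp n) : ℝ :=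
  ∫ y, u (x - y) * v y ∂volume

/-!
The exponent `2` may be any `r` with `1 ≤ r ≤ p⁻`, and `2 / p⁻` any `θ ≥ (r - 1) / p⁻`.

Normalise so that `h = |f|^q`, with `q = p / r`, satisfies `∫ h ≤ 1`, and let `M = h * η_{t,m}`.
Since `s ≤ 1 + s^q`, scaling gives `|f(y)| ≤ a^{1/q(y)} (1 + h(y) / a)` for every `a > 0`. Take
`a = max(1, M(x))`, which is at most `max(1, t⁻ⁿ)`. Where `η_{t,m}(x - y) > 1` one has `t < 1` and
`|x - y| ≤ t^{1 - n/m}`, so local log-Hölder continuity replaces `a^{1/q(y)}` by `a^{1/q(x)}` up to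
a constant; elsewhere `η_{t,m}(x - y) |f(y)| ≤ η_{t,m}(x - y) + h(y)` suffices. Integrating in `y`,
`|η_{t,m} * f| ≤ D max(1, M)^{r/p}`.

Raised to the power `p`, the right-hand side is `Dᵖ max(1, M)^r`. The factor `max(1, M)^{r - 1}` is
absorbed by `max(1, t⁻ⁿ)^{θ p}`, and what remains is at most `1 + M`. Dividing by a large constant
multiplies it by `εᵖ`, and `∫ εᵖ (1 + M) ≤ ∫ εᵖ + ε ∫ M` tends to `0` with `ε`: the mass of `M` is
bounded, and `∫ εᵖ → 0` is the decay condition with `p_∞ = ∞`.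
-/

section ENNRealPowers

theorem le_one_add_rpow (s : ℝ≥0∞) {q : ℝ} (hq : 1 ≤ q) : s ≤ 1 + s ^ q := by
  rcases le_total s 1 with hs | hs
  · exact hs.trans le_self_add
  · calc s = s ^ (1 : ℝ) := (ENNReal.rpow_one s).symm
      _ ≤ s ^ q := ENNReal.rpow_le_rpow_of_exponent_le hs hq
      _ ≤ 1 + s ^ q := le_add_self

theorem le_rpow_one_div_mul_one_add_rpow_div (F : ℝ≥0∞) {a : ℝ≥0∞} (ha0 : a ≠ 0) (ha : a ≠ ∞)
    {q : ℝ} (hq : 1 ≤ q) : F ≤ a ^ (1 / q) * (1 + F ^ q / a) := by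
  have hq0 : 0 < q := by linarith
  have ha_root0 : a ^ (1 / q) ≠ 0 := (ENNReal.rpow_pos (pos_iff_ne_zero.2 ha0) ha).ne'
  have ha_root : a ^ (1 / q) ≠ ∞ := ENNReal.rpow_ne_top_of_nonneg (by positivity) ha
  have hpow : (F / a ^ (1 / q)) ^ q = F ^ q / a := by
    rw [ENNReal.div_rpow_of_nonneg _ _ hq0.le, ← ENNReal.rpow_mul, one_div_mul_cancel hq0.ne',
      ENNReal.rpow_one]
  calc F = a ^ (1 / q) * (F / a ^ (1 / q)) := (ENNReal.mul_div_cancel ha_root0 ha_root).symm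
    _ ≤ a ^ (1 / q) * (1 + F ^ q / a) := by
      gcongr
      exact hpow ▸ le_one_add_rpow _ hq

theorem mul_div_rpow_le_rpow_add_mul {v D T a M ε : ℝ≥0∞} {P r : ℝ} (hT0 : T ≠ 0) (hT : T ≠ ∞)
    (ha0 : a ≠ 0) (ha : a ≠ ∞) (hP : 1 ≤ P) (hε : ε ≤ 1) (hv : v ≤ D * a ^ (r / P))
    (haM : a ≤ 1 + M) (haT : a ^ (r - 1) ≤ T ^ P) :
    (ε * (v / (D * T))) ^ P ≤ ε ^ P + ε * M := by
  have hP0 : 0 < P := by linarith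
  have hquot : v / (D * T) ≤ a ^ (r / P) / T := by
    refine ENNReal.div_le_of_le_mul (hv.trans_eq ?_)
    rw [mul_comm D T, ← mul_assoc, ENNReal.div_mul_cancel hT0 hT, mul_comm]
  have hquot_pow : (a ^ (r / P) / T) ^ P ≤ a := by
    rw [ENNReal.div_rpow_of_nonneg _ _ hP0.le, ← ENNReal.rpow_mul, div_mul_cancel₀ r hP0.ne']
    refine ENNReal.div_le_of_le_mul ?_
    calc a ^ r = a * a ^ (r - 1) := by
          rw [ENNReal.rpow_sub _ _ ha0 ha, ENNReal.rpow_one, ENNReal.mul_div_cancel ha0 ha]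
      _ ≤ a * T ^ P := by gcongr
  have hε_pow : ε ^ P ≤ ε := by
    simpa only [ENNReal.rpow_one] using ENNReal.rpow_le_rpow_of_exponent_ge hε hP
  calc (ε * (v / (D * T))) ^ P ≤ (ε * (a ^ (r / P) / T)) ^ P := by gcongr
    _ = ε ^ P * (a ^ (r / P) / T) ^ P := ENNReal.mul_rpow_of_nonneg _ _ hP0.le
    _ ≤ ε ^ P * (1 + M) := by gcongr; exact hquot_pow.trans haM
    _ = ε ^ P + ε ^ P * M := by ring
    _ ≤ ε ^ P + ε * M := by gcongr

theorem enorm_div_div_mul (v : ℝ) {D ε T : ℝ} (hD : 0 < D) (hε : 0 < ε) (hT : 0 < T) :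
    ‖v / (D / ε * T)‖ₑ =
      ENNReal.ofReal ε * (‖v‖ₑ / (ENNReal.ofReal D * ENNReal.ofReal T)) := by
  have hDT : 0 < D * T := mul_pos hD hT
  have hreal : v / (D / ε * T) = ε * (v * (D * T)⁻¹) := by field
  rw [hreal, enorm_mul, enorm_mul, enorm_inv hDT.ne', Real.enorm_of_nonneg hε.le,
    Real.enorm_of_nonneg hDT.le, ENNReal.ofReal_mul hD.le, div_eq_mul_inv ‖v‖ₑ]

theorem enorm_div_rpow_le_rpow_add_mul {v D T ε b P r : ℝ} {M : ℝ≥0∞} (hD : 0 < D) (hε0 : 0 < ε)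
    (hε1 : ε ≤ 1) (hT : 0 < T) (hr : 1 ≤ r) (hP : 1 ≤ P)
    (hv : ‖v‖ₑ ≤ ENNReal.ofReal D * max 1 M ^ (r / P)) (hMb : max 1 M ≤ ENNReal.ofReal b)
    (hbT : b ^ (r - 1) ≤ T ^ P) :
    ‖v / (D / ε * T)‖ₑ ^ P ≤ ENNReal.ofReal ε ^ P + ENNReal.ofReal ε * M := by
  have hb : 0 < b := ENNReal.ofReal_pos.1 (one_pos.trans_le ((le_max_left _ _).trans hMb))
  rw [enorm_div_div_mul v hD hε0 hT]
  refine mul_div_rpow_le_rpow_add_mul (ENNReal.ofReal_pos.2 hT).ne' ENNReal.ofReal_ne_top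
    (one_pos.trans_le (le_max_left _ _)).ne' (ne_top_of_le_ne_top ENNReal.ofReal_ne_top hMb)
    hP (ENNReal.ofReal_le_one.2 hε1) hv (max_le le_self_add le_add_self) ?_
  calc max 1 M ^ (r - 1) ≤ ENNReal.ofReal b ^ (r - 1) := by gcongr
    _ = ENNReal.ofReal (b ^ (r - 1)) := ENNReal.ofReal_rpow_of_pos hb
    _ ≤ ENNReal.ofReal (T ^ P) := ENNReal.ofReal_le_ofReal hbT
    _ = ENNReal.ofReal T ^ P := (ENNReal.ofReal_rpow_of_pos hT).symm

end ENNRealPowers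

section Lebesgue

theorem lintegral_comp_inv_smul {E : Type*} [NormedAddCommGroup E] [NormedSpace ℝ E]
    [MeasurableSpace E] [BorelSpace E] [FiniteDimensional ℝ E] (μ : Measure E)
    [μ.IsAddHaarMeasure] (f : E → ℝ≥0∞) {r : ℝ} (hr : r ≠ 0) :
    ∫⁻ x, f (r⁻¹ • x) ∂μ = ENNReal.ofReal |r ^ Module.finrank ℝ E| * ∫⁻ x, f x ∂μ := by
  have hmap := lintegral_map_equiv f (μ := μ)
    (Homeomorph.smulOfNeZero r⁻¹ (inv_ne_zero hr) : E ≃ₜ E).toMeasurableEquiv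
  simp only [Homeomorph.toMeasurableEquiv_coe, Homeomorph.smulOfNeZero_apply] at hmap
  rw [← hmap]
  change ∫⁻ x, f x ∂(μ.map (r⁻¹ • ·)) = _
  rw [Measure.map_addHaar_smul μ (inv_ne_zero hr), lintegral_smul_measure, inv_pow, inv_inv,
    smul_eq_mul]

theorem lconvolution_le_mul_lintegral {G : Type*} [Add G] [Neg G] [MeasurableSpace G]
    {μ : Measure G} {f g : G → ℝ≥0∞} {C : ℝ≥0∞} (hC : C ≠ ∞)
    (hg : ∀ z, g z ≤ C) (x : G) : (f ⋆ₗ[μ] g) x ≤ C * ∫⁻ y, f y ∂μ := by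
  rw [← lintegral_const_mul' _ _ hC]
  refine lintegral_mono fun y => ?_
  rw [mul_comm]
  exact mul_le_mul_left (hg _) _

theorem lintegral_lconvolution {G : Type*} [AddGroup G] [MeasurableSpace G] {μ : Measure G}
    [MeasurableAdd₂ G] [MeasurableNeg G] [SFinite μ]
    [μ.IsAddLeftInvariant] {f g : G → ℝ≥0∞} (hf : AEMeasurable f μ) (hg : Measurable g) :
    ∫⁻ x, (f ⋆ₗ[μ] g) x ∂μ = (∫⁻ y, f y ∂μ) * ∫⁻ z, g z ∂μ := by
  have hmeas : AEMeasurable (Function.uncurry fun x y => f y * g (-y + x)) (μ.prod μ) :=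
    hf.comp_snd.mul (hg.comp (measurable_snd.neg.add measurable_fst)).aemeasurable
  have hinner (y : G) : ∫⁻ x, f y * g (-y + x) ∂μ = f y * ∫⁻ z, g z ∂μ := by
    rw [lintegral_const_mul _ (f := fun x => g (-y + x))
      (hg.comp (measurable_const_add _)), lintegral_add_left_eq_self]
  simp only [lconvolution_def]
  rw [lintegral_lintegral_swap hmeas]
  simp only [hinner]
  exact lintegral_mul_const'' _ hf

end Lebesgue

section Kernel

variable {n : ℕ} {t m : ℝ}

/-- The kernel `η_{t,m}` with values in `ℝ≥0∞`, to be used with the convolution `⋆ₗ`. -/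
def etaKerENNReal (n : ℕ) (t m : ℝ) (z : Esp n) : ℝ≥0∞ := ENNReal.ofReal (etaKer n t m z)

/-- The mass of `η_{1,m}`, which is the mass of `η_{t,m}` for every `t > 0`. -/
def etaMass (n : ℕ) (m : ℝ) : ℝ≥0∞ := ∫⁻ z : Esp n, ENNReal.ofReal ((1 + ‖z‖) ^ (-m))

theorem etaMass_ne_top (hm : (n : ℝ) < m) : etaMass n m ≠ ∞ :=
  (finite_integral_one_add_norm (by simpa using hm)).ne

theorem etaKer_nonneg (ht : 0 < t) (z : Esp n) : 0 ≤ etaKer n t m z := by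
  unfold etaKer
  positivity

theorem etaKer_le_rpow_neg (hm : 0 ≤ m) (ht : 0 < t) (z : Esp n) :
    etaKer n t m z ≤ t ^ (-(n : ℝ)) := by
  have hz : 0 ≤ ‖z‖ / t := by positivity
  exact mul_le_of_le_one_right (by positivity)
    (Real.rpow_le_one_of_one_le_of_nonpos (by linarith) (by linarith))

theorem etaKer_le_one_of_one_le (hm : 0 ≤ m) (ht : 1 ≤ t) (z : Esp n) : etaKer n t m z ≤ 1 :=
  (etaKer_le_rpow_neg hm (by linarith) z).trans
    (Real.rpow_le_one_of_one_le_of_nonpos ht (by simp))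

theorem etaKer_le_one_of_rpow_le_norm (hm : 0 < m) (ht : 0 < t) {z : Esp n}
    (hz : t ^ (1 - n / m) ≤ ‖z‖) : etaKer n t m z ≤ 1 := by
  have hbase : t ^ (-(n / m)) ≤ 1 + ‖z‖ / t := by
    calc t ^ (-(n / m)) = t ^ (1 - n / m) / t := by
          rw [← Real.rpow_sub_one ht.ne']
          ring_nf
      _ ≤ ‖z‖ / t := by gcongr
      _ ≤ 1 + ‖z‖ / t := by linarith
  calc t ^ (-(n : ℝ)) * (1 + ‖z‖ / t) ^ (-m)
      ≤ t ^ (-(n : ℝ)) * (t ^ (-(n / m))) ^ (-m) := by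
        gcongr _ * ?_
        exact Real.rpow_le_rpow_of_nonpos (by positivity) hbase (by linarith)
    _ = 1 := by
        rw [← Real.rpow_mul ht.le, ← Real.rpow_add ht, neg_mul_neg, div_mul_cancel₀ _ hm.ne',
          neg_add_cancel, Real.rpow_zero]

theorem measurable_etaKerENNReal : Measurable (etaKerENNReal n t m) := by
  unfold etaKerENNReal etaKer
  fun_prop

theorem etaKerENNReal_le (hm : 0 ≤ m) (ht : 0 < t) (z : Esp n) :
    etaKerENNReal n t m z ≤ ENNReal.ofReal (t ^ (-(n : ℝ))) :=
  ENNReal.ofReal_le_ofReal (etaKer_le_rpow_neg hm ht z)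

theorem lintegral_etaKerENNReal (ht : 0 < t) : ∫⁻ z, etaKerENNReal n t m z = etaMass n m := by
  have hscale (z : Esp n) : etaKerENNReal n t m z =
      ENNReal.ofReal (t ^ (-(n : ℝ))) * ENNReal.ofReal ((1 + ‖t⁻¹ • z‖) ^ (-m)) := by
    rw [etaKerENNReal, etaKer, ENNReal.ofReal_mul (by positivity), norm_smul,
      Real.norm_of_nonneg (by positivity), div_eq_inv_mul]
  simp only [hscale]
  rw [lintegral_const_mul' _ _ ENNReal.ofReal_ne_top,
    lintegral_comp_inv_smul volume (fun z : Esp n => ENNReal.ofReal ((1 + ‖z‖) ^ (-m))) ht.ne',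
    finrank_euclideanSpace_fin, abs_of_pos (by positivity), ← mul_assoc,
    ← ENNReal.ofReal_mul (by positivity), ← Real.rpow_natCast, ← Real.rpow_add ht,
    neg_add_cancel, Real.rpow_zero, ENNReal.ofReal_one, one_mul, etaMass]

theorem enorm_convR_etaKer_le_lconvolution (ht : 0 < t) (f : Esp n → ℝ) (x : Esp n) :
    ‖convR n (etaKer n t m) f x‖ₑ ≤ ((fun y => ‖f y‖ₑ) ⋆ₗ etaKerENNReal n t m) x := by
  refine (enorm_integral_le_lintegral_enorm _).trans_eq (lintegral_congr fun y => ?_)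
  rw [enorm_mul, mul_comm, Real.enorm_of_nonneg (etaKer_nonneg ht _), neg_add_eq_sub,
    etaKerENNReal]

theorem convR_div_const (u f : Esp n → ℝ) (a : ℝ) (x : Esp n) :
    convR n u (fun y => f y / a) x = convR n u f x / a := by
  simp only [convR, ← mul_div_assoc, integral_div]

end Kernel

section LogHolder

variable {n : ℕ} {p : Esp n → ℝ} {l : ℝ}

theorem IsLogHolder.div_const (hp : IsLogHolder n p l) {r : ℝ} (hr : 0 < r) :
    IsLogHolder n (fun x => p x / r) (r * l) := by
  obtain ⟨c, hc, hloc, hdec⟩ := hp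
  have hinv (x : Esp n) : 1 / (p x / r) = r * (1 / p x) := by rw [one_div_div, mul_one_div]
  refine ⟨r * c, by positivity, fun x y => ?_, fun x => ?_⟩
  · rw [hinv, hinv, ← mul_sub, abs_mul, abs_of_pos hr, mul_div_assoc]
    gcongr
    exact hloc x y
  · rw [hinv, ← mul_sub, abs_mul, abs_of_pos hr, mul_div_assoc]
    gcongr
    exact hdec x

theorem mul_neg_log_le_log_exp_one_add_one_div {d t α : ℝ} (ht : 0 < t) (hd0 : 0 < d)
    (hd : d ≤ t ^ α) : α * -log t ≤ log (exp 1 + 1 / d) := by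
  have hlog_d : log d ≤ α * log t := by
    simpa only [Real.log_rpow ht] using Real.log_le_log hd0 hd
  calc α * -log t ≤ -log d := by linarith
    _ = log (1 / d) := by rw [one_div, Real.log_inv]
    _ ≤ log (exp 1 + 1 / d) := Real.log_le_log (by positivity) (by linarith [Real.exp_pos 1])

theorem rpow_le_exp_mul_rpow_of_abs_sub_le {a t N α c d u v : ℝ} (ht : 0 < t) (ht1 : t < 1)
    (hα : 0 < α) (hc : 0 ≤ c) (hd0 : 0 < d) (hd : d ≤ t ^ α)
    (huv : |u - v| ≤ c / log (exp 1 + 1 / d)) (ha : 1 ≤ a) (hat : a ≤ t ^ (-N)) :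
    a ^ v ≤ exp (c * N / α) * a ^ u := by
  have ha0 : 0 < a := by linarith
  have hlog_t : 0 < -log t := neg_pos.2 (Real.log_neg ht ht1)
  have hlog_a : log a ≤ N * -log t := by
    have := Real.log_le_log ha0 hat
    rw [Real.log_rpow ht] at this
    linarith
  have hdiff : v - u ≤ c / (α * -log t) :=
    calc v - u ≤ |u - v| := by linarith [neg_abs_le (u - v)]
      _ ≤ c / log (exp 1 + 1 / d) := huv
      _ ≤ c / (α * -log t) := by
        gcongr
        exact mul_neg_log_le_log_exp_one_add_one_div ht hd0 hd
  have hexponent : log a * (v - u) ≤ c * N / α :=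
    calc log a * (v - u) ≤ log a * (c / (α * -log t)) := by
          gcongr
          exact Real.log_nonneg ha
      _ ≤ N * -log t * (c / (α * -log t)) := by gcongr
      _ = c * N / α := by
        field [neg_ne_zero.1 hlog_t.ne']
  rw [Real.rpow_def_of_pos ha0, Real.rpow_def_of_pos ha0, ← Real.exp_add]
  exact Real.exp_le_exp.2 (by linarith)

/-- The factor by which `a ^ (1 / q)` varies over a ball of radius `t ^ (1 - n / m)`, for `t < 1`
and `1 ≤ a ≤ t⁻ⁿ`, when `1 / q` is locally log-Hölder continuous with constant `c`. -/
def oscFactor (n : ℕ) (m c : ℝ) : ℝ≥0∞ := ENNReal.ofReal (exp (c * n / (1 - n / m)))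

theorem rpow_one_div_le_of_norm_sub_le {m t c : ℝ} {q : Esp n → ℝ} {x y : Esp n}
    (hm : (n : ℝ) < m) (ht : 0 < t) (ht1 : t < 1) (hxy : ‖x - y‖ ≤ t ^ (1 - n / m)) (hc : 0 ≤ c)
    (hq : |1 / q x - 1 / q y| ≤ c / log (exp 1 + 1 / ‖x - y‖)) {a : ℝ≥0∞} (ha1 : 1 ≤ a)
    (hat : a ≤ ENNReal.ofReal (t ^ (-(n : ℝ)))) :
    a ^ (1 / q y) ≤ oscFactor n m c * a ^ (1 / q x) := by
  have hα : 0 < 1 - n / m := sub_pos.2 ((div_lt_one (n.cast_nonneg.trans_lt hm)).2 hm)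
  rcases eq_or_ne x y with rfl | hne
  · refine le_mul_of_one_le_left zero_le (ENNReal.one_le_ofReal.2 (Real.one_le_exp ?_))
    positivity
  · have ha_top : a ≠ ∞ := ne_top_of_le_ne_top ENNReal.ofReal_ne_top hat
    lift a to NNReal using ha_top
    have ha1' : (1 : ℝ) ≤ a := by exact_mod_cast ha1
    have ha0 : (0 : ℝ) < a := by linarith
    rw [oscFactor, ← ENNReal.ofReal_coe_nnreal, ENNReal.ofReal_rpow_of_pos ha0,
      ENNReal.ofReal_rpow_of_pos ha0, ← ENNReal.ofReal_mul (Real.exp_nonneg _)]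
    refine ENNReal.ofReal_le_ofReal (rpow_le_exp_mul_rpow_of_abs_sub_le ht ht1 hα hc
      (norm_sub_pos_iff.2 hne) hxy hq ha1' ?_)
    rw [← ENNReal.ofReal_coe_nnreal] at hat
    exact (ENNReal.ofReal_le_ofReal_iff (by positivity)).1 hat

end LogHolder

section Modular

open scoped Topology

variable {n : ℕ} {p q : Esp n → ℝ}

theorem vMod_eq_lintegral_enorm (p f : Esp n → ℝ) : vMod n p f = ∫⁻ x, ‖f x‖ₑ ^ p x := by
  simp only [vMod, Real.enorm_eq_ofReal_abs]

theorem luxNorm_le_mul_luxNorm {f g : Esp n → ℝ} {C : ℝ} (hC : 0 < C) (hf : MemVLp n q f)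
    (hfg : ∀ lam : ℝ, 0 < lam → vMod n q (fun x => f x / lam) ≤ 1 →
      vMod n p (fun x => g x / (C * lam)) ≤ 1) :
    luxNorm n p g ≤ C * luxNorm n q f := by
  rw [← div_le_iff₀' hC]
  refine le_csInf hf.2 fun lam ⟨hlam, hmod⟩ => ?_
  rw [div_le_iff₀' hC]
  exact csInf_le ⟨0, fun _ h => h.1.le⟩ ⟨by positivity, hfg lam hlam hmod⟩

theorem rpow_le_mul_one_add_rpow_neg {c m ε P R : ℝ} (hc : 0 < c) (hε : 0 < ε)
    (hεm : ε ≤ exp (-(c * m))) (hR : 0 ≤ R) (hm : 0 ≤ m) (hP : 0 < P)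
    (hdec : 1 / P ≤ c / log (exp 1 + R)) :
    ε ^ P ≤ exp m * ε ^ (1 / c) * (1 + R) ^ (-m) := by
  set ℓ := log (exp 1 + R)
  have hexp1 : 1 < exp 1 := Real.one_lt_exp_iff.2 one_pos
  have hℓ1 : 1 ≤ ℓ := (Real.le_log_iff_exp_le (by linarith)).2 (by linarith)
  have hℓR : log (1 + R) ≤ ℓ := Real.log_le_log (by linarith) (by linarith)
  have hlogε : log ε ≤ -(c * m) := (Real.log_le_iff_le_exp hε).2 hεm
  have hP_ge : ℓ / c ≤ P := by
    rw [div_le_div_iff₀ hP (by linarith)] at hdec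
    rw [div_le_iff₀ hc]
    linarith
  have hdiv_le : log ε / c + m ≤ 0 := by
    have : log ε / c ≤ -m := by
      rw [div_le_iff₀ hc]
      linarith
    linarith
  have hexponent : log ε * P ≤ m + log ε * (1 / c) + log (1 + R) * -m :=
    calc log ε * P ≤ log ε * (ℓ / c) := by
          refine mul_le_mul_of_nonpos_left hP_ge ?_
          linarith [mul_nonneg hc.le hm]
      _ = (log ε / c + m) * ℓ - m * ℓ := by ring
      _ ≤ (log ε / c + m) * 1 - m * log (1 + R) := by
        gcongr ?_ - m * ?_
        exact mul_le_mul_of_nonpos_left hℓ1 hdiv_le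
      _ = m + log ε * (1 / c) + log (1 + R) * -m := by ring
  rw [Real.rpow_def_of_pos hε, Real.rpow_def_of_pos hε, Real.rpow_def_of_pos (by linarith),
    ← Real.exp_add, ← Real.exp_add]
  exact Real.exp_le_exp.2 hexponent

theorem tendsto_vMod_const (hp : ∀ x, 0 < p x) (hlog : IsLogHolder n p 0) :
    Tendsto (fun ε : ℝ => vMod n p fun _ => ε) (𝓝[>] 0) (𝓝 0) := by
  obtain ⟨c, hc, -, hdec⟩ := hlog
  have hm : (n : ℝ) < n + 1 := lt_add_one _
  set m : ℝ := n + 1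
  have hm0 : 0 ≤ m := n.cast_nonneg.trans hm.le
  have hbound : ∀ᶠ ε : ℝ in 𝓝[>] 0,
      (vMod n p fun _ => ε) ≤ ENNReal.ofReal (exp m * ε ^ (1 / c)) * etaMass n m := by
    filter_upwards [Ioc_mem_nhdsGT (Real.exp_pos (-(c * m)))] with ε ⟨hε, hεm⟩
    rw [etaMass, ← lintegral_const_mul' _ _ ENNReal.ofReal_ne_top]
    refine lintegral_mono fun x => ?_
    have hdec_x := (le_abs_self _).trans (hdec x)
    rw [sub_zero] at hdec_x
    dsimp only
    rw [abs_of_pos hε, ENNReal.ofReal_rpow_of_pos hε, ← ENNReal.ofReal_mul (by positivity)]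
    exact ENNReal.ofReal_le_ofReal
      (rpow_le_mul_one_add_rpow_neg hc hε hεm (norm_nonneg x) hm0 (hp x) hdec_x)
  have hpow : Tendsto (fun ε : ℝ => exp m * ε ^ (1 / c)) (𝓝[>] 0) (𝓝 0) := by
    have hcont : ContinuousAt (fun ε : ℝ => ε ^ (1 / c)) 0 :=
      Real.continuousAt_rpow_const 0 (1 / c) (.inr (by positivity))
    have hlim := hcont.tendsto.const_mul (exp m)
    rw [Real.zero_rpow (by positivity), mul_zero] at hlim
    exact hlim.mono_left nhdsWithin_le_nhds
  have hlim := ENNReal.Tendsto.mul_const (ENNReal.tendsto_ofReal hpow)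
    (.inr (etaMass_ne_top (n := n) hm))
  rw [ENNReal.ofReal_zero, zero_mul] at hlim
  exact tendsto_of_tendsto_of_tendsto_of_le_of_le' tendsto_const_nhds hlim
    (.of_forall fun _ => zero_le) hbound

theorem exists_vMod_const_add_mul_le_one (hp : ∀ x, 0 < p x) (hlog : IsLogHolder n p 0)
    {I : ℝ≥0∞} (hI : I ≠ ∞) :
    ∃ ε : ℝ, 0 < ε ∧ ε ≤ 1 ∧ (vMod n p fun _ => ε) + ENNReal.ofReal ε * I ≤ 1 := by
  have hlin : Tendsto (fun ε : ℝ => ENNReal.ofReal ε * I) (𝓝[>] 0) (𝓝 0) := by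
    have hid : Tendsto (fun ε : ℝ => ε) (𝓝[>] 0) (𝓝 0) := nhdsWithin_le_nhds
    simpa only [ENNReal.ofReal_zero, zero_mul] using
      ENNReal.Tendsto.mul_const (ENNReal.tendsto_ofReal hid) (.inr hI)
  have hsum := (tendsto_vMod_const hp hlog).add hlin
  rw [add_zero] at hsum
  obtain ⟨ε, hε, hε0, hε1⟩ :=
    ((hsum.eventually_le_const one_pos).and (Ioc_mem_nhdsGT one_pos)).exists
  exact ⟨ε, hε0, hε1, hε⟩

end Modular

section ConvolutionBound

variable {n : ℕ} {m : ℝ}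

theorem enorm_mul_etaKerENNReal_le {t c : ℝ} {q f : Esp n → ℝ} {x y : Esp n} {a : ℝ≥0∞}
    (hm : (n : ℝ) < m) (ht : 0 < t) (hc : 0 ≤ c)
    (hlog : |1 / q x - 1 / q y| ≤ c / log (exp 1 + 1 / ‖x - y‖)) (hqy : 1 ≤ q y) (ha1 : 1 ≤ a)
    (hat : a ≤ ENNReal.ofReal (max 1 (t ^ (-(n : ℝ))))) :
    ‖f y‖ₑ * etaKerENNReal n t m (-y + x) ≤
      oscFactor n m c * a ^ (1 / q x) *
          (etaKerENNReal n t m (-y + x) +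
            a⁻¹ * (‖f y‖ₑ ^ q y * etaKerENNReal n t m (-y + x))) +
        (etaKerENNReal n t m (-y + x) + ‖f y‖ₑ ^ q y) := by
  have hm0 : 0 < m := n.cast_nonneg.trans_lt hm
  set k := etaKerENNReal n t m (-y + x) with hk
  set F := ‖f y‖ₑ
  by_cases hfar : k ≤ 1
  · calc F * k ≤ (1 + F ^ q y) * k := by gcongr; exact le_one_add_rpow F hqy
      _ = k + F ^ q y * k := by ring
      _ ≤ k + F ^ q y := by gcongr; exact mul_le_of_le_one_right' hfar
      _ ≤ _ := le_add_self
  · have hker : ¬ etaKer n t m (x - y) ≤ 1 := by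
      rwa [hk, etaKerENNReal, neg_add_eq_sub, ENNReal.ofReal_le_one] at hfar
    have ht1 : t < 1 := not_le.1 fun h => hker (etaKer_le_one_of_one_le hm0.le h _)
    have hxy : ‖x - y‖ ≤ t ^ (1 - n / m) :=
      le_of_not_ge fun h => hker (etaKer_le_one_of_rpow_le_norm hm0 ht h)
    rw [max_eq_right (Real.one_le_rpow_of_pos_of_le_one_of_nonpos ht ht1.le (by simp))] at hat
    calc F * k ≤ a ^ (1 / q y) * (1 + F ^ q y / a) * k := by
          gcongr
          exact le_rpow_one_div_mul_one_add_rpow_div F (one_pos.trans_le ha1).ne'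
            (ne_top_of_le_ne_top ENNReal.ofReal_ne_top hat) hqy
      _ ≤ oscFactor n m c * a ^ (1 / q x) * (1 + F ^ q y / a) * k := by
        gcongr
        exact rpow_one_div_le_of_norm_sub_le hm ht ht1 hxy hc hlog ha1 hat
      _ = oscFactor n m c * a ^ (1 / q x) *
          (k + a⁻¹ * (F ^ q y * k)) := by
        rw [div_eq_mul_inv (F ^ q y)]
        ring
      _ ≤ _ := le_self_add

theorem max_one_lconvolution_etaKerENNReal_le (hm : 0 ≤ m) {t : ℝ} (ht : 0 < t)
    {h : Esp n → ℝ≥0∞} (hh : ∫⁻ y, h y ≤ 1) (x : Esp n) :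
    max 1 ((h ⋆ₗ etaKerENNReal n t m) x) ≤ ENNReal.ofReal (max 1 (t ^ (-(n : ℝ)))) := by
  refine max_le (ENNReal.one_le_ofReal.2 (le_max_left _ _)) ?_
  calc (h ⋆ₗ etaKerENNReal n t m) x ≤ ENNReal.ofReal (t ^ (-(n : ℝ))) * ∫⁻ y, h y :=
        lconvolution_le_mul_lintegral ENNReal.ofReal_ne_top (etaKerENNReal_le hm ht) x
    _ ≤ ENNReal.ofReal (t ^ (-(n : ℝ))) := mul_le_of_le_one_right' hh
    _ ≤ ENNReal.ofReal (max 1 (t ^ (-(n : ℝ)))) := ENNReal.ofReal_le_ofReal (le_max_right _ _)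

theorem enorm_convR_etaKer_le (hm : (n : ℝ) < m) {t c : ℝ} (ht : 0 < t) (hc : 0 ≤ c)
    {q f : Esp n → ℝ} (hqmeas : Measurable q) (hq1 : ∀ᵐ y, 1 ≤ q y) (hf : AEMeasurable f)
    {x : Esp n} (hlog : ∀ y, |1 / q x - 1 / q y| ≤ c / log (exp 1 + 1 / ‖x - y‖)) {a : ℝ≥0∞}
    (ha1 : 1 ≤ a) (hat : a ≤ ENNReal.ofReal (max 1 (t ^ (-(n : ℝ))))) :
    ‖convR n (etaKer n t m) f x‖ₑ ≤
      oscFactor n m c * a ^ (1 / q x) *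
          (etaMass n m + a⁻¹ * ((fun y => ‖f y‖ₑ ^ q y) ⋆ₗ etaKerENNReal n t m) x) +
        (etaMass n m + vMod n q f) := by
  rw [vMod_eq_lintegral_enorm, lconvolution_def]
  set h := fun y => ‖f y‖ₑ ^ q y
  set k := fun y => etaKerENNReal n t m (-y + x)
  have hh : AEMeasurable h := hf.enorm.pow hqmeas.aemeasurable
  have hk : Measurable k := measurable_etaKerENNReal.comp (measurable_neg.add_const x)
  have hhk : AEMeasurable fun y => h y * k y := hh.mul hk.aemeasurable
  have hk_int : ∫⁻ y, k y = etaMass n m := by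
    simp only [k, neg_add_eq_sub]
    rw [lintegral_sub_left_eq_self (etaKerENNReal n t m), lintegral_etaKerENNReal ht]
  calc ‖convR n (etaKer n t m) f x‖ₑ
      ≤ ∫⁻ y, ‖f y‖ₑ * k y := enorm_convR_etaKer_le_lconvolution ht f x
    _ ≤ ∫⁻ y, oscFactor n m c * a ^ (1 / q x) * (k y + a⁻¹ * (h y * k y)) + (k y + h y) :=
      lintegral_mono_ae <| hq1.mono fun y hqy =>
        enorm_mul_etaKerENNReal_le hm ht hc (hlog y) hqy ha1 hat
    _ = oscFactor n m c * a ^ (1 / q x) * (∫⁻ y, k y + a⁻¹ * (h y * k y)) +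
        ∫⁻ y, k y + h y := by
      rw [lintegral_add_right' _ (by fun_prop), lintegral_const_mul'' _ (by fun_prop)]
    _ = oscFactor n m c * a ^ (1 / q x) * (etaMass n m + a⁻¹ * ∫⁻ y, h y * k y) +
        (etaMass n m + ∫⁻ y, h y) := by
      rw [lintegral_add_left hk, lintegral_add_left hk, lintegral_const_mul'' _ hhk, hk_int]

theorem exists_enorm_convR_etaKer_le (hm : (n : ℝ) < m) {q : Esp n → ℝ} {l : ℝ}
    (hqmeas : Measurable q) (hq1 : ∀ᵐ y, 1 ≤ q y) (hlog : IsLogHolder n q l) :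
    ∃ D : ℝ, 0 < D ∧ ∀ t : ℝ, 0 < t → ∀ f : Esp n → ℝ, AEMeasurable f → vMod n q f ≤ 1 →
      ∀ x, 0 ≤ q x → ‖convR n (etaKer n t m) f x‖ₑ ≤
        ENNReal.ofReal D *
          max 1 (((fun y => ‖f y‖ₑ ^ q y) ⋆ₗ etaKerENNReal n t m) x) ^ (1 / q x) := by
  obtain ⟨c, hc, hloc, -⟩ := hlog
  set K := oscFactor n m c
  set I := etaMass n m
  have hD : (K + 1) * (I + 1) ≠ ∞ := ENNReal.mul_ne_top
    (ENNReal.add_ne_top.2 ⟨ENNReal.ofReal_ne_top, ENNReal.one_ne_top⟩)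
    (ENNReal.add_ne_top.2 ⟨etaMass_ne_top hm, ENNReal.one_ne_top⟩)
  refine ⟨((K + 1) * (I + 1)).toReal, ENNReal.toReal_pos (by simp) hD, ?_⟩
  intro t ht f hf hmod x hqx
  rw [ENNReal.ofReal_toReal hD]
  have hmod' := (vMod_eq_lintegral_enorm q f).symm.trans_le hmod
  have hat := max_one_lconvolution_etaKerENNReal_le (n.cast_nonneg.trans hm.le) ht hmod' x
  set M := ((fun y => ‖f y‖ₑ ^ q y) ⋆ₗ etaKerENNReal n t m) x
  set a := max 1 M
  have ha1 : 1 ≤ a := le_max_left _ _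
  have hroot : 1 ≤ a ^ (1 / q x) := by
    simpa only [ENNReal.rpow_zero] using
      ENNReal.rpow_le_rpow_of_exponent_le ha1 (one_div_nonneg.2 hqx)
  have haM : a⁻¹ * M ≤ 1 := by
    rw [← ENNReal.div_eq_inv_mul]
    exact ENNReal.div_le_of_le_mul ((le_max_right _ _).trans_eq (one_mul a).symm)
  calc ‖convR n (etaKer n t m) f x‖ₑ
      ≤ K * a ^ (1 / q x) * (I + a⁻¹ * M) + (I + vMod n q f) :=
        enorm_convR_etaKer_le hm ht hc.le hqmeas hq1 hf (hloc x) ha1 hat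
    _ ≤ K * a ^ (1 / q x) * (I + 1) + (I + 1) := by gcongr
    _ ≤ K * a ^ (1 / q x) * (I + 1) + a ^ (1 / q x) * (I + 1) := by
      gcongr
      exact le_mul_of_one_le_left zero_le hroot
    _ = (K + 1) * (I + 1) * a ^ (1 / q x) := by ring

theorem exists_vMod_convR_etaKer_div_le_one (hm : (n : ℝ) < m) {p : Esp n → ℝ}
    (hpmeas : Measurable p) (hp0 : ∀ x, 0 < p x) (hlog : IsLogHolder n p 0) {r : ℝ} (hr : 1 ≤ r)
    (hrp : ∀ᵐ x, r ≤ p x) :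
    ∃ C : ℝ, 0 < C ∧ ∀ t T : ℝ, 0 < t → 0 < T →
      (∀ᵐ x, max 1 (t ^ (-(n : ℝ))) ^ (r - 1) ≤ T ^ p x) →
      ∀ f : Esp n → ℝ, AEMeasurable f → vMod n (fun x => p x / r) f ≤ 1 →
        vMod n p (fun x => convR n (etaKer n t m) f x / (C * T)) ≤ 1 := by
  have hr0 : 0 < r := by linarith
  obtain ⟨D, hD0, hD⟩ := exists_enorm_convR_etaKer_le hm (hpmeas.div_const r)
    (hrp.mono fun x hx => (one_le_div hr0).2 hx) (hlog.div_const hr0)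
  obtain ⟨ε, hε0, hε1, hε⟩ := exists_vMod_const_add_mul_le_one hp0 hlog (etaMass_ne_top hm)
  refine ⟨D / ε, by positivity, fun t T ht hT hTbound f hf hmod => ?_⟩
  have hmod' := (vMod_eq_lintegral_enorm (fun x => p x / r) f).symm.trans_le hmod
  set h := fun y => ‖f y‖ₑ ^ (p y / r)
  set M := h ⋆ₗ etaKerENNReal n t m
  have hpoint : ∀ᵐ x, ‖convR n (etaKer n t m) f x / (D / ε * T)‖ₑ ^ p x ≤
      ENNReal.ofReal ε ^ p x + ENNReal.ofReal ε * M x := by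
    filter_upwards [hrp, hTbound] with x hrx hTx
    have hat : max 1 (M x) ≤ ENNReal.ofReal (max 1 (t ^ (-(n : ℝ)))) :=
      max_one_lconvolution_etaKerENNReal_le (n.cast_nonneg.trans hm.le) ht hmod' x
    have hconv := hD t ht f hf hmod x (by have := hp0 x; positivity)
    rw [one_div_div] at hconv
    exact enorm_div_rpow_le_rpow_add_mul hD0 hε0 hε1 hT hr (hr.trans hrx) hconv hat hTx
  have hM_int : ∫⁻ x, M x ≤ etaMass n m := by
    rw [lintegral_lconvolution (hf.enorm.pow (hpmeas.div_const r).aemeasurable)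
      measurable_etaKerENNReal, lintegral_etaKerENNReal ht]
    exact mul_le_of_le_one_left' hmod'
  rw [vMod_eq_lintegral_enorm]
  calc ∫⁻ x, ‖convR n (etaKer n t m) f x / (D / ε * T)‖ₑ ^ p x
      ≤ ∫⁻ x, ENNReal.ofReal ε ^ p x + ENNReal.ofReal ε * M x := lintegral_mono_ae hpoint
    _ = (vMod n p fun _ => ε) + ENNReal.ofReal ε * ∫⁻ x, M x := by
      rw [lintegral_add_left (hpmeas.const_pow _), lintegral_const_mul' _ _ ENNReal.ofReal_ne_top,
        vMod_eq_lintegral_enorm, Real.enorm_of_nonneg hε0.le]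
    _ ≤ (vMod n p fun _ => ε) + ENNReal.ofReal ε * etaMass n m := by gcongr
    _ ≤ 1 := hε

end ConvolutionBound

theorem max_one_rpow_neg_rpow {t N : ℝ} (ht : 0 < t) (hN : 0 ≤ N) (θ : ℝ) :
    max 1 (t ^ (-N)) ^ θ = t ^ (-N * if t ≤ 1 then θ else 0) := by
  split_ifs with ht1
  · rw [max_eq_right (Real.one_le_rpow_of_pos_of_le_one_of_nonpos ht ht1 (by linarith)),
      ← Real.rpow_mul ht.le]
  · rw [max_eq_left (Real.rpow_le_one_of_one_le_of_nonpos (le_of_not_ge ht1) (by linarith)),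
      Real.one_rpow, mul_zero, Real.rpow_zero]

theorem statement1_general (n : ℕ) (m : ℝ) (hm : (n : ℝ) < m)
    (p : Esp n → ℝ) (hpmeas : Measurable p) (hp1 : ∀ x, 1 ≤ p x)
    (pm : ℝ) (hpm : pm = essInf p volume) (hlog : IsLogHolder n p 0)
    (r : ℝ) (hr : 1 ≤ r) (hrpm : r ≤ pm) (θ : ℝ) (hθ : (r - 1) / pm ≤ θ) :
    ∃ C : ℝ, 0 < C ∧ ∀ t : ℝ, 0 < t → ∀ f : Esp n → ℝ,
      MemVLp n (fun x => p x / r) f →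
      luxNorm n p (convR n (etaKer n t m) f) ≤
        C * t ^ (-(n : ℝ) * (if t ≤ 1 then θ else 0)) * luxNorm n (fun x => p x / r) f := by
  have hpm_le : ∀ᵐ x, pm ≤ p x :=
    hpm ▸ ae_essInf_le ⟨1, eventually_map.2 (ae_of_all _ hp1)⟩
  have hθ_nonneg : 0 ≤ θ := (div_nonneg (by linarith) (by linarith)).trans hθ
  obtain ⟨C, hC, hmodular⟩ := exists_vMod_convR_etaKer_div_le_one hm hpmeas
    (fun x => one_pos.trans_le (hp1 x)) hlog hr (hpm_le.mono fun x hx => hrpm.trans hx)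
  refine ⟨C, hC, fun t ht f hf => ?_⟩
  rw [← max_one_rpow_neg_rpow ht n.cast_nonneg]
  set b := max 1 (t ^ (-(n : ℝ)))
  have hb : 1 ≤ b := le_max_left _ _
  have hbound : ∀ᵐ x, b ^ (r - 1) ≤ (b ^ θ) ^ p x := hpm_le.mono fun x hx => by
    rw [← Real.rpow_mul (by positivity)]
    refine Real.rpow_le_rpow_of_exponent_le hb ?_
    calc r - 1 ≤ θ * pm := (div_le_iff₀ (by linarith)).1 hθ
      _ ≤ θ * p x := by gcongr
  refine luxNorm_le_mul_luxNorm (by positivity) hf fun lam _ hmod => ?_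
  have := hmodular t (b ^ θ) ht (by positivity) hbound _ (hf.1.div_const lam) hmod
  simpa only [convR_div_const, div_div, mul_comm lam] using this

/-- Lemma 3.3 of the paper: `‖η_{t,m} * f‖_{L^{p(·)}} ≤ C t^{-nϑ(t)} ‖f‖_{L^{p(·)/2}}` for a
globally log-Hölder exponent `p` (possibly unbounded) with `2 ≤ p⁻` and `p_∞ = ∞`,
where `ϑ(t) = 2/p⁻` for `0 < t ≤ 1` and `ϑ(t) = 0` for `t > 1`. -/
theorem statement1 (n : ℕ) (hn : 1 ≤ n) (m : ℝ) (hm : (n : ℝ) < m)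
    (p : Esp n → ℝ) (hpmeas : Measurable p) (hp1 : ∀ x, 1 ≤ p x)
    (pm : ℝ) (hpm : pm = essInf p volume)
    (hlog : IsLogHolder n p 0)
    (h2 : 2 ≤ pm) :
    ∃ C : ℝ, 0 < C ∧ ∀ t : ℝ, 0 < t → ∀ f : Esp n → ℝ,
      MemVLp n (fun x => p x / 2) f →
      luxNorm n p (convR n (etaKer n t m) f) ≤
        C * t ^ (-(n : ℝ) * (if t ≤ 1 then 2 / pm else 0)) *
        luxNorm n (fun x => p x / 2) f :=
  statement1_general n m hm p hpmeas hp1 pm hpm hlog 2 one_le_two h2 (2 / pm)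
    (by gcongr; norm_num)
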